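/- Let H = {rrr, rrb, yyr} (the patterns: a monochromatic red triangle, a triangle with two red edges and one blue edge, and a triangle with two yellow edges and one red edge). Then for every positive integer n, g(n) ≤ h_2(n, H) ≤ 2·g(n). -/

import Mathlib

/-- The three edge colors: red, blue, yellow. -/
inductive Col : Type
  | r | b | y
  deriving DecidableEq

/-- A (symmetric) 3-edge-coloring of the complete graph `K_n` on vertex set `Fin n`. -/
structure Coloring (n : ℕ) where
  col : Fin n → Fin n → Col
  symm : ∀ i j, col i j = col j i

/-- The pattern (multiset of edge colors) of the triangle on vertices `u, v, w`. -/
def triPattern {n : ℕ} (c : Coloring n) (u v w : Fin n) : Multiset Col :=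
  {c.col u v, c.col v w, c.col u w}

/-- The coloring `c` contains the pattern `P`: some triangle has color multiset `P`. -/
def Contains {n : ℕ} (c : Coloring n) (P : Multiset Col) : Prop :=
  ∃ u v w : Fin n, u ≠ v ∧ v ≠ w ∧ u ≠ w ∧ triPattern c u v w = P

/-- The coloring `c` avoids every pattern in the family `H`. -/
def Avoids {n : ℕ} (c : Coloring n) (H : Set (Multiset Col)) : Prop :=
  ∀ P ∈ H, ¬ Contains c P

/-- A vertex set `S` is two-colored under `c`: the edges inside `S` use at most
two of the three colors, i.e. some color is missing on the edges inside `S`. -/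
def TwoColored {n : ℕ} (c : Coloring n) (S : Finset (Fin n)) : Prop :=
  ∃ x : Col, ∀ i ∈ S, ∀ j ∈ S, i ≠ j → c.col i j ≠ x

/-- `h2 c` is the maximum size of a vertex set whose induced edges use at most
two of the three colors. -/
noncomputable def h2 {n : ℕ} (c : Coloring n) : ℕ :=
  sSup {k | ∃ S : Finset (Fin n), TwoColored c S ∧ S.card = k}

/-- `h2n n H = min { h2 c : c a 3-edge-coloring of K_n avoiding all patterns in H }`. -/
noncomputable def h2n (n : ℕ) (H : Set (Multiset Col)) : ℕ :=
  sInf {m | ∃ c : Coloring n, Avoids c H ∧ h2 c = m}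

/-- Pattern abbreviations. -/
def Prrr : Multiset Col := {Col.r, Col.r, Col.r}
def Pbbb : Multiset Col := {Col.b, Col.b, Col.b}
def Pyyy : Multiset Col := {Col.y, Col.y, Col.y}
def Prrb : Multiset Col := {Col.r, Col.r, Col.b}
def Prry : Multiset Col := {Col.r, Col.r, Col.y}
def Pbbr : Multiset Col := {Col.b, Col.b, Col.r}
def Pbby : Multiset Col := {Col.b, Col.b, Col.y}
def Pyyr : Multiset Col := {Col.y, Col.y, Col.r}
def Pyyb : Multiset Col := {Col.y, Col.y, Col.b}
def Prby : Multiset Col := {Col.r, Col.b, Col.y}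

/-- The clique number of a graph: the largest size of a clique. -/
noncomputable def cliqueNum {V : Type*} (G : SimpleGraph V) : ℕ :=
  sSup {k | ∃ S : Finset V, G.IsNClique k S}

/-- The independence number of a graph: the largest size of an independent set. -/
noncomputable def indepNum {V : Type*} (G : SimpleGraph V) : ℕ :=
  cliqueNum Gᶜ

/-- `g(n)`: the smallest independence number of an `n`-vertex graph with no
cycle of length 3 and no cycle of length 5 (i.e. odd girth at least 7). -/
noncomputable def gval (n : ℕ) : ℕ :=
  sInf {m | ∃ G : SimpleGraph (Fin n),
    (∀ (a : Fin n) (w : G.Walk a a), w.IsCycle → w.length ≠ 3 ∧ w.length ≠ 5) ∧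
    indepNum G = m}

/-!
In a coloring `c` avoiding the three patterns, two red edges at a vertex always close up with a
yellow edge, and two yellow edges never close up with a red one. So the red graph `R` has no
triangle, and no pentagon either, since two yellow diagonals of a red pentagon would close up with
a red side. A set missing red is independent in `R`. A set missing yellow spans a matching in `R`,
and in a set missing blue the red neighbors of a fixed vertex and the remaining vertices are both
independent in `R`; either way the set is bipartite in `R`. Hence `α(R) ≤ h₂(c) ≤ 2 α(R)`.
Conversely every graph of odd girth at least 7 is the red graph of such a coloring: color pairs at
distance two yellow and all farther pairs blue.
-/

/-- Odd girth at least 7, phrased exactly as in `gval`: no cycle of length 3 or 5. In particular a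
graph without odd cycles qualifies. -/
def OddGirthAtLeastSeven {V : Type*} (G : SimpleGraph V) : Prop :=
  ∀ (a : V) (w : G.Walk a a), w.IsCycle → w.length ≠ 3 ∧ w.length ≠ 5

section Graph

variable {V W : Type*} {G : SimpleGraph V} {H : SimpleGraph W}

theorem isCycle_cons_of_even_length {u v : V} (huv : G.Adj u v) {p : G.Walk v u} (hp : p.IsPath)
    (heven : Even p.length) : (p.cons huv).IsCycle := by
  refine (SimpleGraph.Walk.cons_isCycle_iff p huv).2 ⟨hp, fun hmem => ?_⟩
  have hlen : p.length = 1 := hp.length_eq_one_of_mem_edges (Sym2.eq_swap ▸ hmem)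
  simp [hlen] at heven

-- Each time `bypass` cuts out a closed walk, that walk is a cycle or traverses one edge twice.
theorem exists_odd_isCycle_or_even_length_bypass [DecidableEq V] {u v : V} (p : G.Walk u v) :
    (∃ (a : V) (c : G.Walk a a), c.IsCycle ∧ Odd c.length ∧ c.length ≤ p.length) ∨
      (Even p.bypass.length ↔ Even p.length) := by
  induction p with
  | nil => exact .inr Iff.rfl
  | @cons u v w huv p ih =>
    rcases ih with ⟨a, c, hc, hodd, hle⟩ | hparity
    · exact .inl ⟨a, c, hc, hodd, hle.trans (by simp)⟩
    by_cases hu : u ∈ p.bypass.support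
    · have hsplit : (p.bypass.takeUntil u hu).length + (p.bypass.dropUntil u hu).length
          = p.bypass.length := by
        rw [← SimpleGraph.Walk.length_append, SimpleGraph.Walk.take_spec]
      have hbypass := p.length_bypass_le_length
      by_cases heven : Even (p.bypass.takeUntil u hu).length
      · refine .inl ⟨u, _, isCycle_cons_of_even_length huv (p.bypass_isPath.takeUntil hu) heven,
          ?_, ?_⟩
        · simpa using heven.add_one
        · simp only [SimpleGraph.Walk.length_cons]
          omega
      · right
        rw [SimpleGraph.Walk.bypass, dif_pos hu, SimpleGraph.Walk.length_cons]
        grind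
    · right
      simp [SimpleGraph.Walk.bypass, hu, Nat.even_add_one, hparity]

theorem exists_odd_isCycle_of_odd_length {a : V} (w : G.Walk a a) (hw : Odd w.length) :
    ∃ (b : V) (c : G.Walk b b), c.IsCycle ∧ Odd c.length ∧ c.length ≤ w.length := by
  classical
  refine (exists_odd_isCycle_or_even_length_bypass w).resolve_right fun hparity => ?_
  have hlen : w.bypass.length = 0 :=
    SimpleGraph.Walk.length_eq_zero_iff.2 (SimpleGraph.Walk.isPath_iff_nil.1 w.bypass_isPath)
  rw [← Nat.not_even_iff_odd, ← hparity, hlen] at hw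
  exact hw Even.zero

theorem OddGirthAtLeastSeven.five_lt_length (hG : OddGirthAtLeastSeven G) {a : V}
    (w : G.Walk a a) (hw : Odd w.length) : 5 < w.length := by
  obtain ⟨b, c, hc, hodd, hle⟩ := exists_odd_isCycle_of_odd_length w hw
  have hshort := hG b c hc
  have hthree := hc.three_le_length
  grind

theorem oddGirthAtLeastSeven_bot : OddGirthAtLeastSeven (⊥ : SimpleGraph V) :=
  fun _ w hw => absurd hw (SimpleGraph.isAcyclic_bot w)

theorem colorable_two_of_subsingleton_neighborSet
    (h : ∀ v, (G.neighborSet v).Subsingleton) : G.Colorable 2 :=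
  SimpleGraph.IsAcyclic.isBipartite fun v _ hc =>
    hc.snd_ne_penultimate <|
      h v (SimpleGraph.Walk.adj_snd hc.not_nil) (SimpleGraph.Walk.adj_penultimate hc.not_nil).symm

theorem indepNum_eq : indepNum G = G.indepNum :=
  SimpleGraph.cliqueNum_compl

theorem indepNum_le_of_embedding [Finite V] (f : H ↪g G) : H.indepNum ≤ G.indepNum := by
  obtain ⟨s, hs⟩ := H.exists_isNIndepSet_indepNum
  rw [← hs.card_eq, ← s.card_map f.toEmbedding]
  refine SimpleGraph.IsIndepSet.card_le_indepNum ?_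
  rw [Finset.coe_map]
  rintro _ ⟨u, hu, rfl⟩ _ ⟨v, hv, rfl⟩ huv hadj
  exact hs.isIndepSet hu hv (ne_of_apply_ne f huv) (f.map_adj_iff.1 hadj)

theorem card_le_mul_indepNum_of_colorable [Fintype V] {k : ℕ} (h : G.Colorable k) :
    Fintype.card V ≤ k * G.indepNum := by
  classical
  obtain ⟨C⟩ := h
  have hclass (x : Fin k) : ({v | C v = x} : Finset V).card ≤ G.indepNum :=
    SimpleGraph.IsIndepSet.card_le_indepNum <| by
      rw [Finset.coe_filter_univ]
      exact C.isIndepSet_colorClass x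
  simpa [mul_comm] using
    Finset.card_le_mul_card_image_of_maps_to (s := Finset.univ) (f := C)
      (fun v _ => Finset.mem_univ (C v)) G.indepNum fun x _ => hclass x

theorem card_le_mul_indepNum_of_induce_colorable [Finite V] {s : Finset V} {k : ℕ}
    (h : (G.induce (s : Set V)).Colorable k) : s.card ≤ k * G.indepNum := by
  calc s.card = Fintype.card (s : Set V) := by simp
    _ ≤ k * (G.induce (s : Set V)).indepNum := card_le_mul_indepNum_of_colorable h
    _ ≤ k * G.indepNum :=
      Nat.mul_le_mul_left k (indepNum_le_of_embedding (SimpleGraph.Embedding.induce _))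

end Graph

section Extremal

variable {n : ℕ}

theorem gval_le {G : SimpleGraph (Fin n)} (hG : OddGirthAtLeastSeven G) :
    gval n ≤ G.indepNum :=
  Nat.sInf_le ⟨G, hG, indepNum_eq⟩

theorem exists_indepNum_eq_gval (n : ℕ) :
    ∃ G : SimpleGraph (Fin n), OddGirthAtLeastSeven G ∧ G.indepNum = gval n := by
  obtain ⟨G, hG, hGn⟩ := Nat.sInf_mem (⟨_, ⊥, oddGirthAtLeastSeven_bot, rfl⟩ :
    {m | ∃ G : SimpleGraph (Fin n), OddGirthAtLeastSeven G ∧ indepNum G = m}.Nonempty)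
  exact ⟨G, hG, indepNum_eq.symm.trans hGn⟩

variable {c : Coloring n} {H : Set (Multiset Col)}

theorem h2n_le (hc : Avoids c H) : h2n n H ≤ h2 c :=
  Nat.sInf_le ⟨c, hc, rfl⟩

theorem exists_h2_eq_h2n (hc : Avoids c H) : ∃ c' : Coloring n, Avoids c' H ∧ h2 c' = h2n n H :=
  Nat.sInf_mem (s := {m | ∃ c : Coloring n, Avoids c H ∧ h2 c = m}) ⟨_, c, hc, rfl⟩

end Extremal

theorem eq_of_triple_eq {α : Type*} {p q s x z : α} (h : ({p, q, s} : Multiset α) = {x, x, z}) :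
    (p = x ∧ q = x ∧ s = z) ∨ (p = x ∧ q = z ∧ s = x) ∨ (p = z ∧ q = x ∧ s = x) := by
  classical
  have hx := congrArg (Multiset.count x) h
  have hz := congrArg (Multiset.count z) h
  simp only [Multiset.insert_eq_cons, Multiset.count_cons, Multiset.count_singleton] at hx hz
  grind

namespace Coloring

variable {n : ℕ} {c : Coloring n}

/-- The graph of the edges that have a given color, which turns statements about patterns and
two-colored sets into statements about triangles and independent sets. -/
def colorGraph (c : Coloring n) (x : Col) : SimpleGraph (Fin n) where
  Adj i j := i ≠ j ∧ c.col i j = x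
  symm := ⟨fun i j h => ⟨h.1.symm, (c.symm j i).trans h.2⟩⟩
  loopless := ⟨fun _ h => h.1 rfl⟩

theorem colorGraph_adj {x : Col} {i j : Fin n} :
    (c.colorGraph x).Adj i j ↔ i ≠ j ∧ c.col i j = x :=
  Iff.rfl

theorem eq_of_colorGraph_adj {x x' : Col} {i j : Fin n} (h : (c.colorGraph x).Adj i j)
    (h' : (c.colorGraph x').Adj i j) : x = x' :=
  h.2.symm.trans h'.2

theorem twoColored_iff {S : Finset (Fin n)} :
    TwoColored c S ↔ ∃ x, (c.colorGraph x).IsIndepSet (S : Set (Fin n)) := by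
  refine exists_congr fun x => ?_
  simp +contextual only [SimpleGraph.isIndepSet_iff, Set.Pairwise, colorGraph_adj, SetLike.mem_coe,
    ne_eq, not_false_eq_true, true_and]

theorem h2_le_iff {m : ℕ} : h2 c ≤ m ↔ ∀ x, (c.colorGraph x).indepNum ≤ m := by
  have hbdd : BddAbove {k | ∃ S : Finset (Fin n), TwoColored c S ∧ S.card = k} := by
    refine ⟨Fintype.card (Fin n), ?_⟩
    rintro _ ⟨S, -, rfl⟩
    exact S.card_le_univ
  rw [h2, csSup_le_iff' hbdd]
  constructor
  · intro h x
    obtain ⟨S, hS⟩ := (c.colorGraph x).exists_isNIndepSet_indepNum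
    exact h _ ⟨S, twoColored_iff.2 ⟨x, hS.isIndepSet⟩, hS.card_eq⟩
  · rintro h _ ⟨S, hS, rfl⟩
    obtain ⟨x, hx⟩ := twoColored_iff.1 hS
    exact hx.card_le_indepNum.trans (h x)

theorem indepNum_colorGraph_le_h2 (c : Coloring n) (x : Col) :
    (c.colorGraph x).indepNum ≤ h2 c :=
  h2_le_iff.1 le_rfl x

theorem contains_iff {x z : Col} : Contains c {x, x, z} ↔ ∃ u v w,
    (c.colorGraph x).Adj u v ∧ (c.colorGraph x).Adj v w ∧ (c.colorGraph z).Adj u w := by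
  constructor
  · rintro ⟨u, v, w, huv, hvw, huw, h⟩
    rcases eq_of_triple_eq h with ⟨h₁, h₂, h₃⟩ | ⟨h₁, h₂, h₃⟩ | ⟨h₁, h₂, h₃⟩
    · exact ⟨u, v, w, ⟨huv, h₁⟩, ⟨hvw, h₂⟩, huw, h₃⟩
    · exact ⟨v, u, w, .symm ⟨huv, h₁⟩, ⟨huw, h₃⟩, hvw, h₂⟩
    · exact ⟨v, w, u, ⟨hvw, h₂⟩, .symm ⟨huw, h₃⟩, .symm ⟨huv, h₁⟩⟩
  · rintro ⟨u, v, w, huv, hvw, huw⟩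
    exact ⟨u, v, w, huv.1, hvw.1, huw.1, by rw [triPattern, huv.2, hvw.2, huw.2]⟩

theorem avoids_iff : Avoids c {Prrr, Prrb, Pyyr} ↔
    (∀ ⦃u v w⦄, (c.colorGraph .r).Adj u v → (c.colorGraph .r).Adj v w → u ≠ w →
      (c.colorGraph .y).Adj u w) ∧
    ∀ ⦃u v w⦄, (c.colorGraph .y).Adj u v → (c.colorGraph .y).Adj v w →
      ¬ (c.colorGraph .r).Adj u w := by
  simp only [Avoids, Set.mem_insert_iff, Set.mem_singleton_iff, forall_eq_or_imp, forall_eq,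
    Prrr, Prrb, Pyyr, contains_iff, not_exists, not_and]
  constructor
  · rintro ⟨hrrr, hrrb, hyyr⟩
    refine ⟨fun u v w huv hvw huw => ⟨huw, ?_⟩, hyyr⟩
    cases hcol : c.col u w with
    | r => exact absurd ⟨huw, hcol⟩ (hrrr u v w huv hvw)
    | b => exact absurd ⟨huw, hcol⟩ (hrrb u v w huv hvw)
    | y => rfl
  · rintro ⟨hrry, hyyr⟩
    refine ⟨fun u v w huv hvw huw => ?_, fun u v w huv hvw huw => ?_, hyyr⟩
    · exact absurd (eq_of_colorGraph_adj huw (hrry huv hvw huw.ne)) (by decide)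
    · exact absurd (eq_of_colorGraph_adj huw (hrry huv hvw huw.ne)) (by decide)

end Coloring

namespace Avoids

open Coloring

variable {n : ℕ} {c : Coloring n}

theorem yellow_adj_of_red (hc : Avoids c {Prrr, Prrb, Pyyr}) {u v w : Fin n}
    (huv : (c.colorGraph .r).Adj u v) (hvw : (c.colorGraph .r).Adj v w) (huw : u ≠ w) :
    (c.colorGraph .y).Adj u w :=
  (avoids_iff.1 hc).1 huv hvw huw

theorem not_red_adj_of_yellow (hc : Avoids c {Prrr, Prrb, Pyyr}) {u v w : Fin n}
    (huv : (c.colorGraph .y).Adj u v) (hvw : (c.colorGraph .y).Adj v w) :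
    ¬ (c.colorGraph .r).Adj u w :=
  (avoids_iff.1 hc).2 huv hvw

theorem not_red_adj_of_red (hc : Avoids c {Prrr, Prrb, Pyyr}) {u v w : Fin n}
    (huv : (c.colorGraph .r).Adj u v) (hvw : (c.colorGraph .r).Adj v w) :
    ¬ (c.colorGraph .r).Adj u w :=
  fun huw => absurd (eq_of_colorGraph_adj huw (hc.yellow_adj_of_red huv hvw huw.ne)) (by decide)

theorem oddGirthAtLeastSeven_red (hc : Avoids c {Prrr, Prrb, Pyyr}) :
    OddGirthAtLeastSeven (c.colorGraph .r) := by
  refine fun a w hw => ⟨fun hlen => ?_, fun hlen => ?_⟩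
  · match w, hlen with
    | .cons hab (.cons hbd (.cons hda .nil)), _ => exact hc.not_red_adj_of_red hab hbd hda.symm
  · match w, hlen with
    | .cons (v := p) hap (.cons (v := q) hpq (.cons (v := s) hqs (.cons (v := t) hst
        (.cons hta .nil)))), _ =>
      have hnodup : [p, q, s, t, a].Nodup := hw.support_nodup
      have haq : a ≠ q := by grind
      have hsa : s ≠ a := by grind
      have hyellow_sa := hc.yellow_adj_of_red hst hta hsa
      have hyellow_aq := hc.yellow_adj_of_red hap hpq haq
      exact hc.not_red_adj_of_yellow hyellow_sa hyellow_aq hqs.symm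

theorem indepNum_yellow_le (hc : Avoids c {Prrr, Prrb, Pyyr}) :
    (c.colorGraph .y).indepNum ≤ 2 * (c.colorGraph .r).indepNum := by
  obtain ⟨S, hS⟩ := (c.colorGraph .y).exists_isNIndepSet_indepNum
  rw [← hS.card_eq]
  refine card_le_mul_indepNum_of_induce_colorable
    (colorable_two_of_subsingleton_neighborSet fun v u hu w hw => ?_)
  by_contra huw
  have huw' := Subtype.coe_ne_coe.2 huw
  exact hS.isIndepSet u.2 w.2 huw' (hc.yellow_adj_of_red hu.symm hw huw')

theorem indepNum_blue_le (hc : Avoids c {Prrr, Prrb, Pyyr}) :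
    (c.colorGraph .b).indepNum ≤ 2 * (c.colorGraph .r).indepNum := by
  obtain ⟨S, hS⟩ := (c.colorGraph .b).exists_isNIndepSet_indepNum
  rw [← hS.card_eq]
  rcases S.eq_empty_or_nonempty with rfl | ⟨v, hv⟩
  · simp
  have hyellow {u : Fin n} (hu : u ∈ S) (huv : v ≠ u) (hred : ¬ (c.colorGraph .r).Adj v u) :
      (c.colorGraph .y).Adj v u := by
    have hblue := hS.isIndepSet hv hu huv
    cases hcol : c.col v u with
    | r => exact absurd ⟨huv, hcol⟩ hred
    | b => exact absurd ⟨huv, hcol⟩ hblue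
    | y => exact ⟨huv, hcol⟩
  let redNeighbor (u : S) : Prop := (c.colorGraph .r).Adj v u
  refine card_le_mul_indepNum_of_induce_colorable (k := Fintype.card Prop)
    (SimpleGraph.Coloring.mk redNeighbor ?_).colorable
  intro u w (huw : (c.colorGraph .r).Adj u w) hsame
  by_cases hvu : (c.colorGraph .r).Adj v u
  · have hvw : (c.colorGraph .r).Adj v w := hsame.mp hvu
    exact hc.not_red_adj_of_red hvu.symm hvw huw
  · have hvw : ¬ (c.colorGraph .r).Adj v w := fun h => hvu (hsame.mpr h)
    have hv_ne_u : v ≠ u := fun h => hvw (h ▸ huw)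
    have hv_ne_w : v ≠ w := fun h => hvu (h ▸ huw.symm)
    exact hc.not_red_adj_of_yellow (hyellow u.2 hv_ne_u hvu).symm (hyellow w.2 hv_ne_w hvw) huw

theorem h2_le (hc : Avoids c {Prrr, Prrb, Pyyr}) : h2 c ≤ 2 * (c.colorGraph .r).indepNum := by
  refine h2_le_iff.2 fun x => ?_
  cases x with
  | r => exact Nat.le_mul_of_pos_left _ two_pos
  | b => exact hc.indepNum_blue_le
  | y => exact hc.indepNum_yellow_le

end Avoids

section DistanceTwo

open Coloring

variable {n : ℕ}

open Classical in
/-- The coloring realizing a given graph as its red graph: edges are red, the non-adjacent pairs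
with a common neighbor are yellow, and all other pairs are blue. -/
noncomputable def distanceTwoColoring (G : SimpleGraph (Fin n)) : Coloring n where
  col i j := if G.Adj i j then .r else if (G.commonNeighbors i j).Nonempty then .y else .b
  symm i j := by simp only [G.adj_comm i j, G.commonNeighbors_symm i j]

variable {G : SimpleGraph (Fin n)}

theorem colorGraph_red_distanceTwoColoring : (distanceTwoColoring G).colorGraph .r = G := by
  ext i j
  simp only [colorGraph_adj, distanceTwoColoring]
  grind [SimpleGraph.Adj.ne]

theorem colorGraph_yellow_distanceTwoColoring_adj {i j : Fin n} :
    ((distanceTwoColoring G).colorGraph .y).Adj i j ↔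
      i ≠ j ∧ ¬ G.Adj i j ∧ (G.commonNeighbors i j).Nonempty := by
  simp only [colorGraph_adj, distanceTwoColoring]
  grind

theorem OddGirthAtLeastSeven.avoids_distanceTwoColoring (hG : OddGirthAtLeastSeven G) :
    Avoids (distanceTwoColoring G) {Prrr, Prrb, Pyyr} := by
  simp only [avoids_iff, colorGraph_red_distanceTwoColoring,
    colorGraph_yellow_distanceTwoColoring_adj]
  constructor
  · intro u v w huv hvw hne
    refine ⟨hne, fun huw => ?_, v, huv, hvw.symm⟩
    let triangle : G.Walk u u := .cons huv (.cons hvw (.cons huw.symm .nil))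
    exact absurd (hG.five_lt_length triangle ⟨1, rfl⟩) (by simp [triangle])
  · rintro u v w ⟨-, -, p, (hup : G.Adj u p), (hvp : G.Adj v p)⟩
      ⟨-, -, q, (hvq : G.Adj v q), (hwq : G.Adj w q)⟩ huw
    let pentagon : G.Walk u u :=
      .cons hup (.cons hvp.symm (.cons hvq (.cons hwq.symm (.cons huw.symm .nil))))
    exact absurd (hG.five_lt_length pentagon ⟨2, rfl⟩) (by simp [pentagon])

end DistanceTwo

theorem stmt18 (n : ℕ) (hn : 0 < n) :
    gval n ≤ h2n n {Prrr, Prrb, Pyyr} ∧ h2n n {Prrr, Prrb, Pyyr} ≤ 2 * gval n := by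
  obtain ⟨G, hG, hGn⟩ := exists_indepNum_eq_gval n
  have hcG := hG.avoids_distanceTwoColoring
  obtain ⟨c, hc, hcn⟩ := exists_h2_eq_h2n hcG
  constructor
  · calc gval n ≤ (c.colorGraph .r).indepNum := gval_le hc.oddGirthAtLeastSeven_red
      _ ≤ h2 c := c.indepNum_colorGraph_le_h2 .r
      _ = h2n n {Prrr, Prrb, Pyyr} := hcn
  · calc h2n n {Prrr, Prrb, Pyyr} ≤ h2 (distanceTwoColoring G) := h2n_le hcG
      _ ≤ 2 * ((distanceTwoColoring G).colorGraph .r).indepNum := hcG.h2_le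
      _ = 2 * gval n := by rw [colorGraph_red_distanceTwoColoring, hGn]
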